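/- arXiv:math-ph/0408053 — 3 statements merged into one kernel-verified Lean document; each statement's English description precedes it below -/
import Mathlib

section
/- The degree-zero subspace l^0 = span{Z_{n,n} : n ∈ ℤ_{≥0}} is a maximal abelian Lie subalgebra of L_L: l^0 is abelian, and any element α ∈ L_L satisfying [α, Z_{k,k}] = 0 for all k ≥ 0 belongs to l^0. -/
/- The ladder insertion-elimination Lie algebra `L_L` of Mencattini–Kreimer,
realized as the complex vector space of finitely supported functions `ℕ × ℕ → ℂ`,
with basis elements `Z n m = single (n, m) 1` and the bilinear bracket determined
on basis elements by formula (e1). -/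

noncomputable section

/-- The underlying vector space of the ladder insertion-elimination Lie algebra. -/
abbrev LL : Type := (ℕ × ℕ) →₀ ℂ

/-- The basis element `Z_{n,m}`. -/
def Z (n m : ℕ) : LL := Finsupp.single (n, m) 1

/-- `Θ(k) = 1` if `k ≥ 0`, and `0` otherwise. -/
def theta (k : ℤ) : ℂ := if 0 ≤ k then 1 else 0

/-- The Kronecker delta `δ_{n,m}`. -/
def kdelta (n m : ℕ) : ℂ := if n = m then 1 else 0

/-- Formula (e1) for the bracket `[Z_{n,m}, Z_{l,s}]` on basis elements, where
`p = (n, m)` and `q = (l, s)`.  (The natural subtractions occurring in the indices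
are truncated, but every such term is multiplied by a `theta` coefficient which
vanishes whenever truncation would occur.) -/
def zb (p q : ℕ × ℕ) : LL :=
  theta ((q.1 : ℤ) - p.2) • Z (q.1 - p.2 + p.1) q.2
    - theta ((q.2 : ℤ) - p.1) • Z q.1 (q.2 - p.1 + p.2)
    - theta ((p.1 : ℤ) - q.2) • Z (p.1 - q.2 + q.1) p.2
    + theta ((p.2 : ℤ) - q.1) • Z p.1 (p.2 - q.1 + q.2)
    - kdelta p.2 q.1 • Z p.1 q.2 + kdelta p.1 q.2 • Z q.1 p.2

/-- The bilinear extension of formula (e1) to all of `L_L`. -/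
def br (x y : LL) : LL :=
  x.sum fun p a => y.sum fun q b => (a * b) • zb p q

end

/-- `l^0`, the span of the diagonal elements `Z_{n,n}`, `n ≥ 0`. -/
noncomputable def lZero : Submodule ℂ LL :=
  Submodule.span ℂ {x : LL | ∃ n : ℕ, x = Z n n}

theorem zb_diag (n k : ℕ) : zb (n, n) (k, k) = 0 := by
  unfold zb theta kdelta
  rcases lt_trichotomy n k with h | h | h
  · have h1 : ¬ ((k : ℤ) ≤ n) := by omega
    simp [h.le, h.ne, h1]
  · subst h
    simp
  · have h1 : ¬ ((n : ℤ) ≤ k) := by omega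
    simp [h.le, h.ne', h1]

theorem zb_low (d k n m : ℕ) (hd : 1 ≤ d) :
    zb (n, m) (k, k) (k + d, k) = if n = m + d ∧ m < k then 1 else 0 := by
  unfold zb theta kdelta Z
  simp only [Finsupp.add_apply, Finsupp.sub_apply, Finsupp.smul_apply, Finsupp.single_apply,
    Prod.mk.injEq, smul_eq_mul]
  grind

theorem zb_up (d k n m : ℕ) (hd : 1 ≤ d) :
    zb (n, m) (k, k) (k, k + d) = if m = n + d ∧ n < k then -1 else 0 := by
  unfold zb theta kdelta Z
  simp only [Finsupp.add_apply, Finsupp.sub_apply, Finsupp.smul_apply, Finsupp.single_apply,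
    Prod.mk.injEq, smul_eq_mul]
  grind

theorem br_Z_apply (α : LL) (k : ℕ) (r : ℕ × ℕ) :
    br α (Z k k) r = ∑ p ∈ α.support, α p * zb p (k, k) r := by
  unfold br Z
  simp [Finsupp.sum, Finsupp.finsetSum_apply]

theorem low_zero (α : LL) (h : ∀ k : ℕ, br α (Z k k) = 0) (d k : ℕ) (hd : 1 ≤ d) :
    α (k + d, k) = 0 := by
  have h1 := br_Z_apply α (k + 1) (k + 1 + d, k + 1)
  have h2 := br_Z_apply α k (k + d, k)
  rw [h] at h1 h2
  have h3 : ∑ p ∈ α.support, α p * (if p = (k + d, k) then 1 else 0) = 0 := by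
    have hs := congrArg₂ (fun a b : ℂ => a - b) h1 h2
    simp only [Finsupp.coe_zero, Pi.zero_apply, sub_zero] at hs
    rw [← Finset.sum_sub_distrib] at hs
    refine Eq.trans ?_ hs.symm
    refine Finset.sum_congr rfl fun p _ => ?_
    obtain ⟨n, m⟩ := p
    rw [zb_low _ _ _ _ hd, zb_low _ _ _ _ hd, ← mul_sub]
    congr 1
    simp only [Prod.mk.injEq]
    grind
  simpa using h3

theorem up_zero (α : LL) (h : ∀ k : ℕ, br α (Z k k) = 0) (d k : ℕ) (hd : 1 ≤ d) :
    α (k, k + d) = 0 := by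
  have h1 := br_Z_apply α (k + 1) (k + 1, k + 1 + d)
  have h2 := br_Z_apply α k (k, k + d)
  rw [h] at h1 h2
  have h3 : ∑ p ∈ α.support, α p * (if p = (k, k + d) then 1 else 0) = 0 := by
    have hs := congrArg₂ (fun a b : ℂ => a - b) h2 h1
    simp only [Finsupp.coe_zero, Pi.zero_apply, sub_zero] at hs
    rw [← Finset.sum_sub_distrib] at hs
    refine Eq.trans ?_ hs.symm
    refine Finset.sum_congr rfl fun p _ => ?_
    obtain ⟨n, m⟩ := p
    rw [zb_up _ _ _ _ hd, zb_up _ _ _ _ hd, ← mul_sub]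
    congr 1
    simp only [Prod.mk.injEq]
    grind
  simpa using h3

theorem lZero_off (x : LL) (hx : x ∈ lZero) (n m : ℕ) (h : n ≠ m) : x (n, m) = 0 := by
  unfold lZero at hx
  induction hx using Submodule.span_induction with
  | mem x hx =>
    obtain ⟨k, rfl⟩ := hx
    unfold Z
    rw [Finsupp.single_apply, if_neg]
    simp only [Prod.mk.injEq]
    omega
  | zero => rfl
  | add x y _ _ hx hy => simp [hx, hy]
  | smul a x _ hx => simp [hx]

/-- `l^0` is a maximal abelian Lie subalgebra of `L_L`: it is
abelian, and any element commuting with all `Z_{k,k}` belongs to `l^0`. -/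
theorem lZero_maximal_abelian :
    (∀ x ∈ lZero, ∀ y ∈ lZero, br x y = 0) ∧
    (∀ α : LL, (∀ k : ℕ, br α (Z k k) = 0) → α ∈ lZero) := by
  constructor
  · intro x hx y hy
    unfold br Finsupp.sum
    refine Finset.sum_eq_zero fun p hp => Finset.sum_eq_zero fun q hq => ?_
    obtain ⟨n, m⟩ := p
    obtain ⟨l, s⟩ := q
    have h1 : n = m := by
      by_contra hc
      exact (Finsupp.mem_support_iff.mp hp) (lZero_off x hx _ _ hc)
    have h2 : l = s := by
      by_contra hc
      exact (Finsupp.mem_support_iff.mp hq) (lZero_off y hy _ _ hc)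
    subst h1 h2
    simp only [zb_diag, smul_zero]
  · intro α h
    rw [← Finsupp.sum_single α]
    refine Submodule.sum_mem _ fun p hp => ?_
    obtain ⟨n, m⟩ := p
    have hne := Finsupp.mem_support_iff.mp hp
    rcases lt_trichotomy n m with hlt | heq | hlt
    · obtain ⟨d, rfl⟩ := Nat.exists_eq_add_of_lt hlt
      exact absurd (up_zero α h (d + 1) n (by omega)) hne
    · subst heq
      have : Finsupp.single (n, n) (α (n, n)) = α (n, n) • Z n n := by
        unfold Z
        simp
      rw [this]
      exact Submodule.smul_mem _ _ (Submodule.subset_span ⟨n, rfl⟩)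
    · obtain ⟨d, rfl⟩ := Nat.exists_eq_add_of_lt hlt
      exact absurd (low_zero α h (d + 1) m (by omega)) hne
end

section
/- The derived subalgebra of L_L equals gl_+(∞): the linear span of all brackets [x, y] with x, y ∈ L_L coincides with the linear span of the elements E_{i,j} = Z_{i,j} − Z_{i+1,j+1}, i, j ∈ ℤ_{≥0}. -/
/-- The element `E_{i,j} = Z_{i,j} − Z_{i+1,j+1}` of `L_L`. -/
noncomputable def E (i j : ℕ) : LL := Z i j - Z (i + 1) (j + 1)

/-- `gl_+(∞)`, the span of the elements `E_{i,j}`. -/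
noncomputable def glInf : Submodule ℂ LL :=
  Submodule.span ℂ {x : LL | ∃ i j : ℕ, x = E i j}

lemma zb_eq (p q : ℕ × ℕ) : zb p q =
    Z (p.1 + (q.1 - p.2)) (q.2 + (p.2 - q.1)) - Z (q.1 + (p.1 - q.2)) (p.2 + (q.2 - p.1)) := by
  obtain ⟨n, m⟩ := p
  obtain ⟨l, s⟩ := q
  have h1 : theta ((l : ℤ) - m) • Z (l - m + n) s + theta ((m : ℤ) - l) • Z n (m - l + s)
      - kdelta m l • Z n s = Z (n + (l - m)) (s + (m - l)) := by
    rcases lt_trichotomy l m with h | h | h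
    · have e1 : theta ((l : ℤ) - m) = 0 := if_neg (by omega)
      have e2 : theta ((m : ℤ) - l) = 1 := if_pos (by omega)
      have e3 : kdelta m l = 0 := if_neg (by omega)
      have e4 : l - m = 0 := by omega
      simp [e1, e2, e3, e4, add_comm]
    · subst h
      simp [theta, kdelta]
    · have e1 : theta ((l : ℤ) - m) = 1 := if_pos (by omega)
      have e2 : theta ((m : ℤ) - l) = 0 := if_neg (by omega)
      have e3 : kdelta m l = 0 := if_neg (by omega)
      have e4 : m - l = 0 := by omega
      simp [e1, e2, e3, e4, add_comm]
  have h2 : theta ((s : ℤ) - n) • Z l (s - n + m) + theta ((n : ℤ) - s) • Z (n - s + l) m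
      - kdelta n s • Z l m = Z (l + (n - s)) (m + (s - n)) := by
    rcases lt_trichotomy n s with h | h | h
    · have e1 : theta ((n : ℤ) - s) = 0 := if_neg (by omega)
      have e2 : theta ((s : ℤ) - n) = 1 := if_pos (by omega)
      have e3 : kdelta n s = 0 := if_neg (by omega)
      have e4 : n - s = 0 := by omega
      simp [e1, e2, e3, e4, add_comm]
    · subst h
      simp [theta, kdelta]
    · have e1 : theta ((n : ℤ) - s) = 1 := if_pos (by omega)
      have e2 : theta ((s : ℤ) - n) = 0 := if_neg (by omega)
      have e3 : kdelta n s = 0 := if_neg (by omega)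
      have e4 : s - n = 0 := by omega
      simp [e1, e2, e3, e4, add_comm]
  simp only [zb]
  rw [← h1, ← h2]
  abel

lemma Z_shift (k a b : ℕ) : Z a b - Z (a + k) (b + k) ∈ glInf := by
  induction k with
  | zero => simp
  | succ k ih =>
    have h : E (a + k) (b + k) ∈ glInf := Submodule.subset_span ⟨_, _, rfl⟩
    have := glInf.add_mem ih h
    simpa [E, add_assoc] using this

lemma Z_sub_mem {a b c d : ℕ} (h : a + d = c + b) : Z a b - Z c d ∈ glInf := by
  rcases le_total a c with hac | hac
  · obtain ⟨k, rfl⟩ := Nat.exists_eq_add_of_le hac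
    obtain rfl : d = b + k := by omega
    exact Z_shift k a b
  · obtain ⟨k, rfl⟩ := Nat.exists_eq_add_of_le hac
    obtain rfl : b = d + k := by omega
    rw [← neg_sub]
    exact glInf.neg_mem (Z_shift k c d)

/-- The derived subalgebra `[L_L, L_L]` equals `gl_+(∞)`. -/
theorem derived_subalgebra_eq_glInf :
    Submodule.span ℂ {z : LL | ∃ x y : LL, z = br x y} = glInf := by
  apply le_antisymm
  · rw [Submodule.span_le]
    rintro _ ⟨x, y, rfl⟩
    refine Submodule.sum_mem _ fun p _ => Submodule.sum_mem _ fun q _ => ?_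
    refine Submodule.smul_mem _ _ ?_
    rw [zb_eq]
    exact Z_sub_mem (by omega)
  · refine Submodule.span_le.2 ?_
    rintro _ ⟨i, j, rfl⟩
    refine Submodule.subset_span ⟨Z 0 1, Z (i + 1) j, ?_⟩
    have : br (Z 0 1) (Z (i + 1) j) = zb (0, 1) (i + 1, j) := by
      simp [br, Z]
    rw [this, zb_eq]
    simp [E, add_comm]
end

section
/- The first cohomology group of L_L with trivial complex coefficients is infinite dimensional: the vector space of linear functionals φ : L_L → ℂ satisfying φ([x,y]) = 0 for all x, y ∈ L_L is infinite dimensional. -/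
/-- The space of linear functionals on `L_L` vanishing on all brackets; with
trivial coefficients this space computes `H¹(L_L, ℂ)`. -/
noncomputable def H1space : Submodule ℂ (LL →ₗ[ℂ] ℂ) where
  carrier := {φ | ∀ x y : LL, φ (br x y) = 0}
  add_mem' := by
    intro φ ψ hφ hψ x y
    simp [hφ x y, hψ x y]
  zero_mem' := by intro x y; simp
  smul_mem' := by
    intro c φ hφ x y
    simp [hφ x y]

/-- The functional `Z_{n,m} ↦ f (n - m)`. -/
noncomputable def degFun (f : ℤ →₀ ℂ) : LL →ₗ[ℂ] ℂ :=
  Finsupp.linearCombination ℂ (fun p : ℕ × ℕ => f ((p.1 : ℤ) - p.2))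

lemma degFun_Z (f : ℤ →₀ ℂ) (n m : ℕ) : degFun f (Z n m) = f ((n : ℤ) - m) := by
  simp [degFun, Z]

lemma theta_mul (f : ℤ →₀ ℂ) (k : ℤ) (a b : ℤ) (h : 0 ≤ k → a = b) :
    theta k * f a = theta k * f b := by
  unfold theta
  split_ifs with hk
  · rw [h hk]
  · simp

lemma kdelta_mul (f : ℤ →₀ ℂ) (n m : ℕ) (a b : ℤ) (h : n = m → a = b) :
    kdelta n m * f a = kdelta n m * f b := by
  unfold kdelta
  split_ifs with hk
  · rw [h hk]
  · simp

lemma theta_add (a b : ℕ) :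
    theta ((a : ℤ) - b) + theta ((b : ℤ) - a) - kdelta b a = 1 := by
  unfold theta kdelta
  rcases lt_trichotomy a b with h | h | h
  · rw [if_neg (by omega), if_pos (by omega), if_neg (by omega)]; ring
  · rw [if_pos (by omega), if_pos (by omega), if_pos (by omega)]; ring
  · rw [if_pos (by omega), if_neg (by omega), if_neg (by omega)]; ring

lemma degFun_zb (f : ℤ →₀ ℂ) (p q : ℕ × ℕ) : degFun f (zb p q) = 0 := by
  obtain ⟨n, m⟩ := p
  obtain ⟨l, s⟩ := q
  simp only [zb, map_add, map_sub, map_smul, degFun_Z, smul_eq_mul]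
  set d : ℤ := (n : ℤ) - m + l - s with hd
  rw [theta_mul f _ _ d (by omega), theta_mul f ((s : ℤ) - n) _ d (by omega),
    theta_mul f ((n : ℤ) - s) _ d (by omega), theta_mul f ((m : ℤ) - l) _ d (by omega),
    kdelta_mul f m l _ d (by omega), kdelta_mul f n s _ d (by omega)]
  linear_combination (theta_add l m - theta_add s n) * f d

lemma degFun_mem (f : ℤ →₀ ℂ) : degFun f ∈ H1space := by
  intro x y
  simp [br, Finsupp.sum, map_sum, degFun_zb]

/-- The linear embedding of finitely supported functions on `ℤ`. -/
noncomputable def degMap : (ℤ →₀ ℂ) →ₗ[ℂ] H1space where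
  toFun f := ⟨degFun f, degFun_mem f⟩
  map_add' f g := by
    apply Subtype.ext
    apply Finsupp.lhom_ext
    intro p c
    simp [degFun, mul_add]
  map_smul' c f := by
    apply Subtype.ext
    apply Finsupp.lhom_ext
    intro p c
    simp [degFun, mul_left_comm]

lemma degMap_injective : Function.Injective degMap := by
  intro f g h
  have h' : degFun f = degFun g := congrArg Subtype.val h
  ext k
  have := congrArg (fun φ => φ (Z k.toNat (-k).toNat)) h'
  simp only [degFun_Z] at this
  rwa [show ((k.toNat : ℤ) - ((-k).toNat : ℤ)) = k by omega] at this

/-- `H¹(L_L, ℂ)` is infinite dimensional: the space of linear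
functionals on `L_L` vanishing on all brackets is not finite dimensional. -/
theorem H1_infinite_dimensional : ¬ Module.Finite ℂ H1space := by
  intro hfin
  have h : Module.Finite ℂ (ℤ →₀ ℂ) := Module.Finite.of_injective degMap degMap_injective
  have : Finite ℤ := Module.Finite.finite_basis (Finsupp.basisSingleOne (R := ℂ) (ι := ℤ))
  exact not_finite ℤ
end
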